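/- Let R be a local ring with Jacobson radical J(R), and let r : I → R and s : J → R be families of nonzero elements of J(R). Suppose there exist bijections σ, τ : I → J such that: (1) for every i ∈ I, the cyclically presented right R-modules R/r_i R and R/s_{σ(i)} R have the same lower part, i.e., there exist units u, v of R and elements x, y ∈ R with r_i u = x s_{σ(i)} and s_{σ(i)} v = y r_i; and (2) for every i ∈ I, R/r_i R and R/s_{τ(i)} R belong to the same epigeny class. Then the right R-modules ∏_{i∈I} R/r_i R and ∏_{j∈J} R/s_j R are isomorphic. -/

import Mathlib

/-- Two modules belong to the same epigeny class if there are surjective homomorphisms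
in both directions. -/
def SameEpigenyClass (S : Type*) [Ring S] (M N : Type*) [AddCommGroup M] [Module S M]
    [AddCommGroup N] [Module S N] : Prop :=
  (∃ f : M →ₗ[S] N, Function.Surjective f) ∧ ∃ g : N →ₗ[S] M, Function.Surjective g

/-- The cyclically presented right `R`-module `R/rR`: the quotient of `R`, viewed as a right
module over itself (i.e. a module over `Rᵐᵒᵖ`), by the right ideal `rR` generated by `r`. -/
abbrev CyclicallyPresented (R : Type*) [Ring R] (r : R) : Type _ :=
  R ⧸ (Submodule.span Rᵐᵒᵖ {r} : Submodule Rᵐᵒᵖ R)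

/-- Two cyclically presented modules `R/rR` and `R/sR` over a local ring `R` have the same
lower part if there are units `u, v` and elements `x, y` with `ru = xs` and `sv = yr`. -/
def SameLowerPart (R : Type*) [Ring R] (r s : R) : Prop :=
  ∃ (u v : Rˣ) (x y : R), r * u = x * s ∧ s * v = y * r

/-!
Write `a ~ₗ b` and `a ~ᵤ b` for equality of lower and of upper parts. An element is determined up
to multiplication by units on both sides by its two parts, and in a local ring the relations `~ₗ`
and `~ᵤ` commute. The permutation `π = τ⁻¹ ∘ σ` of `I` satisfies `r (π i) ~ᵤ s (σ i)` and is a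
product `α ∘ β` of two involutions, with `α` preserving every cycle of `π`. As the relations
commute, there are `d i` with `d i ~ₗ r i` and `d i ~ᵤ r (α i)`. Passing from `r` to `d`, and from
`d` to `s ∘ σ`, the upper parts are now permuted by an involution only. For an involution the
isomorphism is induced by an automorphism of `I → R` built from `2 × 2` matrices over the local
ring, one for each orbit.
-/

section

variable {R : Type*} [Ring R]

section LocalRing

variable [IsLocalRing R]

instance isDedekindFiniteMonoid_of_isLocalRing : IsDedekindFiniteMonoid R where
  mul_eq_one_symm {a b} hab := by
    have h_idem : IsIdempotentElem (b * a) := by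
      rw [IsIdempotentElem, mul_assoc, ← mul_assoc a, hab, one_mul]
    rcases IsLocalRing.isUnit_or_isUnit_of_add_one (add_sub_cancel (b * a) 1) with h | h
    · exact h.mul_left_cancel (by rw [h_idem, mul_one])
    · have hba : b * a = 0 := h.mul_left_cancel (by rw [h_idem.one_sub_mul_self, mul_zero])
      have h_one_eq_zero : (1 : R) = 0 :=
        calc (1 : R) = a * (b * a) * b := by rw [← mul_assoc, hab, one_mul, hab]
          _ = 0 := by rw [hba, mul_zero, zero_mul]
      exact absurd h_one_eq_zero one_ne_zero

theorem isUnit_add_of_not_isUnit {a b : R} (ha : IsUnit a) (hb : ¬IsUnit b) :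
    IsUnit (a + b) := by
  have h : IsUnit (a + b + -b) := by rwa [add_neg_cancel_right]
  exact (IsLocalRing.isUnit_or_isUnit_of_isUnit_add h).resolve_right (by rwa [IsUnit.neg_iff])

theorem isUnit_sub_of_not_isUnit {a b : R} (ha : IsUnit a) (hb : ¬IsUnit b) :
    IsUnit (a - b) := by
  rw [sub_eq_add_neg]
  exact isUnit_add_of_not_isUnit ha (by rwa [IsUnit.neg_iff])

end LocalRing

namespace SameLowerPart

variable {a b c : R}

protected theorem refl (a : R) : SameLowerPart R a a := ⟨1, 1, 1, 1, by simp, by simp⟩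

protected theorem symm : SameLowerPart R a b → SameLowerPart R b a :=
  fun ⟨u, v, x, y, hu, hv⟩ => ⟨v, u, y, x, hv, hu⟩

protected theorem trans :
    SameLowerPart R a b → SameLowerPart R b c → SameLowerPart R a c := by
  rintro ⟨u, v, x, y, hu, hv⟩ ⟨u', v', x', y', hu', hv'⟩
  refine ⟨u * u', v' * v, x * x', y' * y, ?_, ?_⟩
  · rw [Units.val_mul, ← mul_assoc, hu, mul_assoc, hu', mul_assoc]
  · rw [Units.val_mul, ← mul_assoc, hv', mul_assoc, hv, mul_assoc]

theorem of_units_mul_eq_mul (y v : Rˣ) (h : y * a = b * v) : SameLowerPart R a b := by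
  refine ⟨v⁻¹, v, ↑y⁻¹, y, ?_, h.symm⟩
  rw [Units.eq_inv_mul_iff_mul_eq, ← mul_assoc, h, Units.mul_inv_cancel_right]

end SameLowerPart

/-- Left multiplication by units `p` and `p'` induces epimorphisms `R/aR → R/bR` and
`R/bR → R/aR`: the elementwise form of the epigeny class of `R/aR` over a local ring, and the
left-right mirror image of `SameLowerPart`. -/
def SameUpperPart (R : Type*) [Ring R] (a b : R) : Prop :=
  ∃ (p p' : Rˣ) (q q' : R), p * a = b * q ∧ p' * b = a * q'

namespace SameUpperPart

variable {a b c : R}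

protected theorem refl (a : R) : SameUpperPart R a a := ⟨1, 1, 1, 1, by simp, by simp⟩

protected theorem symm : SameUpperPart R a b → SameUpperPart R b a :=
  fun ⟨p, p', q, q', hp, hp'⟩ => ⟨p', p, q', q, hp', hp⟩

protected theorem trans :
    SameUpperPart R a b → SameUpperPart R b c → SameUpperPart R a c := by
  rintro ⟨p, p', q, q', hp, hp'⟩ ⟨r, r', t, t', hr, hr'⟩
  refine ⟨r * p, p' * r', t * q, q' * t', ?_, ?_⟩
  · rw [Units.val_mul, mul_assoc, hp, ← mul_assoc, hr, mul_assoc]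
  · rw [Units.val_mul, mul_assoc, hr', ← mul_assoc, hp', mul_assoc]

theorem of_units_mul_eq_mul (y v : Rˣ) (h : y * a = b * v) : SameUpperPart R a b := by
  refine ⟨y, y⁻¹, v, ↑v⁻¹, h, ?_⟩
  rw [Units.inv_mul_eq_iff_eq_mul, ← mul_assoc, h, Units.mul_inv_cancel_right]

end SameUpperPart

theorem mem_span_mulOpposite_singleton {a x : R} :
    x ∈ (Submodule.span Rᵐᵒᵖ {a} : Submodule Rᵐᵒᵖ R) ↔ ∃ t, a * t = x := by
  simp only [Submodule.mem_span_singleton, MulOpposite.op_surjective.exists, op_smul_eq_mul]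

theorem CyclicallyPresented.exists_units_mul_eq_mul_of_surjective [IsLocalRing R] {a b : R}
    {f : CyclicallyPresented R a →ₗ[Rᵐᵒᵖ] CyclicallyPresented R b}
    (hf : Function.Surjective f) : ∃ (p : Rˣ) (q : R), p * a = b * q := by
  obtain ⟨p, hp⟩ := Submodule.Quotient.mk_surjective _ (f (Submodule.Quotient.mk 1))
  have hf_mk (x : R) : f (Submodule.Quotient.mk x) = Submodule.Quotient.mk (p * x) := by
    have h_smul := map_smul f (MulOpposite.op x) (Submodule.Quotient.mk 1)
    rwa [← hp, ← Submodule.Quotient.mk_smul, ← Submodule.Quotient.mk_smul, op_smul_eq_mul,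
      op_smul_eq_mul, one_mul] at h_smul
  obtain ⟨q, hq⟩ : ∃ q, b * q = p * a := by
    rw [← mem_span_mulOpposite_singleton, ← Submodule.Quotient.mk_eq_zero, ← hf_mk,
      (Submodule.Quotient.mk_eq_zero _).2 (Submodule.mem_span_singleton_self a), map_zero]
  obtain ⟨t, w, htw⟩ : ∃ t w, b * w = 1 - p * t := by
    obtain ⟨m, hm⟩ := hf (Submodule.Quotient.mk 1)
    obtain ⟨t, rfl⟩ := Submodule.Quotient.mk_surjective _ m
    rw [hf_mk, eq_comm, Submodule.Quotient.eq, mem_span_mulOpposite_singleton] at hm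
    exact ⟨t, hm⟩
  rcases IsLocalRing.isUnit_or_isUnit_of_add_one (add_eq_of_eq_sub' htw) with h | h
  · obtain ⟨p, rfl⟩ := isUnit_of_mul_isUnit_left h
    exact ⟨p, q, hq.symm⟩
  · obtain ⟨b, rfl⟩ := isUnit_of_mul_isUnit_left h
    exact ⟨1, ↑b⁻¹ * a, by simp⟩

theorem SameEpigenyClass.sameUpperPart [IsLocalRing R] {a b : R} :
    SameEpigenyClass Rᵐᵒᵖ (CyclicallyPresented R a) (CyclicallyPresented R b) →
      SameUpperPart R a b := by
  rintro ⟨⟨f, hf⟩, g, hg⟩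
  obtain ⟨p, q, hpq⟩ := CyclicallyPresented.exists_units_mul_eq_mul_of_surjective hf
  obtain ⟨p', q', hpq'⟩ := CyclicallyPresented.exists_units_mul_eq_mul_of_surjective hg
  exact ⟨p, p', q, q', hpq, hpq'⟩

/-- `Linked a b` holds when some element has the lower part of `a` and the upper part of `b`:
the composite of the two equivalence relations. -/
def Linked (a b : R) : Prop :=
  ∃ d, SameLowerPart R d a ∧ SameUpperPart R d b

section Corners

variable [IsLocalRing R] {a b c : R}

theorem SameLowerPart.exists_units_mul_eq_mul :
    SameLowerPart R a b → SameUpperPart R a b → ∃ y v : Rˣ, y * a = b * v := by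
  rintro ⟨-, v, -, y, -, hv⟩ ⟨p, -, q, -, hp, -⟩
  by_cases hy : IsUnit y
  · exact ⟨hy.unit, v, hv.symm⟩
  by_cases hq : IsUnit q
  · exact ⟨p, hq.unit, hp⟩
  refine ⟨(isUnit_add_of_not_isUnit p.isUnit hy).unit,
    (isUnit_add_of_not_isUnit v.isUnit hq).unit, ?_⟩
  rw [IsUnit.unit_spec, IsUnit.unit_spec, add_mul, mul_add, hv, hp, add_comm]

theorem exists_eq_mul_add_mul {q y : R} (hl : SameLowerPart R (c * q) (y * c * q))
    (hu : SameUpperPart R c (c * q)) : ∃ z w, c = c * q * z + w * (y * c) := by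
  by_cases hy : IsUnit y
  · obtain ⟨y, rfl⟩ := hy
    exact ⟨0, ↑y⁻¹, by simp⟩
  by_cases hq : IsUnit q
  · obtain ⟨q, rfl⟩ := hq
    exact ⟨↑q⁻¹, 0, by simp⟩
  obtain ⟨u, -, x, -, hux, -⟩ := hl
  obtain ⟨p, -, t, -, hpt, -⟩ := hu
  obtain ⟨E, hE⟩ : IsUnit (p + x * y) :=
    isUnit_add_of_not_isUnit p.isUnit fun h => hy (isUnit_of_mul_isUnit_right h)
  obtain ⟨W, hW⟩ : IsUnit (u + t * q) :=
    isUnit_add_of_not_isUnit u.isUnit fun h => hq (isUnit_of_mul_isUnit_right h)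
  have hEW : E * (c * q) = c * q * W := by
    rw [hE, hW, add_mul, mul_add, ← mul_assoc, hpt, hux]
    noncomm_ring
  have hEW_inv : ↑E⁻¹ * (c * q) = c * q * ↑W⁻¹ := by
    rw [Units.inv_mul_eq_iff_eq_mul, ← mul_assoc, hEW, Units.mul_inv_cancel_right]
  refine ⟨↑W⁻¹ * t, ↑E⁻¹ * x, ?_⟩
  calc c = ↑E⁻¹ * ((p + x * y) * c) := by rw [← hE, Units.inv_mul_cancel_left]
    _ = ↑E⁻¹ * (c * q) * t + ↑E⁻¹ * x * (y * c) := by rw [add_mul, hpt]; noncomm_ring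
    _ = c * q * (↑W⁻¹ * t) + ↑E⁻¹ * x * (y * c) := by rw [hEW_inv]; noncomm_ring

theorem SameLowerPart.mul_left_of_mul_right {q y : R}
    (hl : SameLowerPart R (c * q) (y * c * q)) (hu : SameUpperPart R c (c * q)) :
    SameLowerPart R c (y * c) := by
  by_cases hq : IsUnit q
  · obtain ⟨q, rfl⟩ := hq
    have h_cancel (a : R) : SameLowerPart R (a * q) a := .of_units_mul_eq_mul 1 q (by simp)
    exact (h_cancel c).symm.trans (hl.trans (h_cancel (y * c)))
  obtain ⟨z, w, hc⟩ := exists_eq_mul_add_mul hl hu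
  obtain ⟨v, hv⟩ : IsUnit (1 - q * z) :=
    isUnit_sub_of_not_isUnit isUnit_one fun h => hq (isUnit_of_mul_isUnit_left h)
  refine ⟨v, 1, w, y, ?_, by simp⟩
  rw [hv, mul_sub, mul_one, ← mul_assoc, sub_eq_iff_eq_add']
  exact hc

theorem SameUpperPart.mul_left {q y : R} (hu : SameUpperPart R c (c * q))
    (hl : SameLowerPart R (c * q) (y * c * q)) : SameUpperPart R (y * c) (y * c * q) := by
  by_cases hy : IsUnit y
  · obtain ⟨y, rfl⟩ := hy
    have h_cancel (a : R) : SameUpperPart R a (y * a) := .of_units_mul_eq_mul y 1 (by simp)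
    rw [mul_assoc]
    exact (h_cancel c).symm.trans (hu.trans (h_cancel (c * q)))
  obtain ⟨z, w, hc⟩ := exists_eq_mul_add_mul hl hu
  obtain ⟨p, hp⟩ : IsUnit (1 - y * w) :=
    isUnit_sub_of_not_isUnit isUnit_one fun h => hy (isUnit_of_mul_isUnit_left h)
  refine ⟨p, 1, z, q, ?_, by simp⟩
  calc p * (y * c) = y * (c - w * (y * c)) := by rw [hp]; noncomm_ring
    _ = y * (c * q * z) := by rw [← eq_sub_of_add_eq hc.symm]
    _ = y * c * q * z := by simp only [mul_assoc]

-- Up to units, the three given elements are `a = c * q`, `b = y * c * q` and `c`; take `d = y * c`.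
theorem exists_sameLowerPart_sameUpperPart (hl : SameLowerPart R a b)
    (hu : SameUpperPart R a c) : ∃ d, SameLowerPart R d c ∧ SameUpperPart R d b := by
  obtain ⟨-, v, -, y, -, hv⟩ := id hl
  obtain ⟨p, -, q, -, hp, -⟩ := id hu
  obtain ⟨c, rfl⟩ : ∃ c', c = p * c' := ⟨↑p⁻¹ * c, by simp⟩
  obtain rfl : a = c * q := by rwa [mul_assoc, Units.mul_right_inj] at hp
  have hbv : (1 : Rˣ) * (y * c * q) = b * v := by
    rw [hv, Units.val_one, one_mul, mul_assoc]
  have hpc : ↑p * c = p * c * (1 : Rˣ) := by simp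
  have hl' := hl.trans (.symm (.of_units_mul_eq_mul 1 v hbv))
  have hu' := SameUpperPart.trans (.of_units_mul_eq_mul p 1 hpc) hu.symm
  exact ⟨y * c, (hl'.mul_left_of_mul_right hu').symm.trans (.of_units_mul_eq_mul p 1 hpc),
    (hu'.mul_left hl').trans (.of_units_mul_eq_mul 1 v hbv)⟩

variable (R) in
theorem Linked.equivalence : Equivalence (Linked (R := R)) where
  refl a := ⟨a, .refl a, .refl a⟩
  symm := fun ⟨_, hl, hu⟩ => exists_sameLowerPart_sameUpperPart hl hu
  trans := fun ⟨_, hl, hu⟩ ⟨_, hl', hu'⟩ => by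
    obtain ⟨d, hdl, hdu⟩ := exists_sameLowerPart_sameUpperPart hl'.symm hu.symm
    exact ⟨d, hdl.trans hl, hdu.trans hu'⟩

-- The unit conditions are symmetric in `a` and `a'`, so that choices made independently at `i` and
-- at `β i`, for an involution `β`, have units in matching positions.
theorem exists_intertwiners {a' : R} (hl : SameLowerPart R a b)
    (hu : SameUpperPart R a' b) :
    ∃ f f' g g' : R, f * a = b * f' ∧ g * a' = b * g' ∧
      (IsUnit f ↔ SameUpperPart R a a') ∧ (IsUnit g ↔ ¬SameUpperPart R a a') ∧
      (IsUnit f' ↔ (SameLowerPart R a a' → SameUpperPart R a a')) ∧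
      (IsUnit g' ↔ ¬(SameLowerPart R a a' → SameUpperPart R a a')) := by
  by_cases hU : SameUpperPart R a a'
  · obtain ⟨f, f', hf⟩ := hl.exists_units_mul_eq_mul (hU.trans hu)
    exact ⟨f, f', 0, 0, hf, by simp, by simp [hU], by simp [hU], by simp [hU], by simp [hU]⟩
  by_cases hL : SameLowerPart R a a'
  · obtain ⟨g, g', hg⟩ := (hL.symm.trans hl).exists_units_mul_eq_mul hu
    exact ⟨0, 0, g, g', by simp, hg, by simp [hU], by simp [hU], by simp [hU, hL],
      by simp [hU, hL]⟩
  obtain ⟨-, f', -, f, -, hf⟩ := id hl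
  obtain ⟨g, -, g', -, hg, -⟩ := id hu
  have hf_unit : ¬IsUnit f := by
    rintro ⟨f, rfl⟩
    exact hU ((SameUpperPart.of_units_mul_eq_mul f f' hf.symm).trans hu.symm)
  have hg_unit : ¬IsUnit g' := by
    rintro ⟨g', rfl⟩
    exact hL (hl.trans (SameLowerPart.of_units_mul_eq_mul g g' hg).symm)
  exact ⟨f, f', g, g', hf.symm, hg, by simp [hU, hf_unit], by simp [hU], by simp [hL],
    by simp [hL, hg_unit]⟩

end Corners

section Involution

variable {I : Type*}

/-- The right `R`-linear endomorphism `x ↦ f x + g (x ∘ β)` of `I → R`. When `β` is an involution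
it acts on the coordinates `i` and `β i` by the matrix with diagonal entries `f i`, `f (β i)` and
antidiagonal entries `g i`, `g (β i)`. -/
def involutionMap (β : I → I) (f g : I → R) : (I → R) →ₗ[Rᵐᵒᵖ] (I → R) :=
  LinearMap.mulLeft Rᵐᵒᵖ f + LinearMap.mulLeft Rᵐᵒᵖ g ∘ₗ LinearMap.funLeft Rᵐᵒᵖ R β

theorem involutionMap_apply (β : I → I) (f g x : I → R) :
    involutionMap β f g x = f * x + g * x ∘ β := rfl

theorem involutionMap_comp {β : I → I} (hβ : Function.Involutive β) (f g f' g' : I → R) :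
    involutionMap β f g ∘ₗ involutionMap β f' g' =
      involutionMap β (f * f' + g * g' ∘ β) (f * g' + g * f' ∘ β) := by
  ext x i
  simp only [LinearMap.comp_apply, involutionMap_apply, Pi.add_apply, Pi.mul_apply,
    Function.comp_apply, hβ i]
  noncomm_ring

theorem involutionMap_zero_right_bijective (β : I → I) {f : I → R} (hf : IsUnit f) :
    Function.Bijective (involutionMap β f 0) := by
  simpa only [funext (involutionMap_apply β f 0), zero_mul, add_zero] using
    IsUnit.isUnit_iff_mulLeft_bijective.1 hf

theorem involutionMap_bijective_of_isUnit [IsLocalRing R] {β : I → I}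
    (hβ : Function.Involutive β) {f g : I → R} (hf : ∀ i, IsUnit (f i))
    (hg : ∀ i, ¬IsUnit (g i)) : Function.Bijective (involutionMap β f g) := by
  obtain ⟨k, hfk, hkf⟩ := isUnit_iff_exists.1 (Pi.isUnit_iff.2 hf)
  have hkfβ : k ∘ β * f ∘ β = 1 := congrArg (· ∘ β) hkf
  -- The row and column operations clearing the entries `g` leave the same diagonal entries.
  let S : I → R := f - g * (k * g) ∘ β
  have hS : IsUnit S := Pi.isUnit_iff.2 fun i =>
    isUnit_sub_of_not_isUnit (hf i) fun h => hg i (isUnit_of_mul_isUnit_left h)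
  have h_row : involutionMap β 1 (-(g * k ∘ β)) ∘ₗ involutionMap β f g = involutionMap β S 0 := by
    rw [involutionMap_comp hβ]
    congr 1
    · rw [one_mul, neg_mul, mul_assoc, ← sub_eq_add_neg]
      rfl
    · rw [one_mul, neg_mul, mul_assoc, hkfβ, mul_one, add_neg_cancel]
  have h_col : involutionMap β f g ∘ₗ involutionMap β 1 (-(k * g)) = involutionMap β S 0 := by
    rw [involutionMap_comp hβ]
    congr 1
    · rw [mul_one, Pi.neg_comp, mul_neg, ← sub_eq_add_neg]
    · rw [Pi.one_comp, mul_one, mul_neg, ← mul_assoc, hfk, one_mul, neg_add_cancel]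
  have hS_bij := involutionMap_zero_right_bijective β hS
  constructor
  · rw [← h_row, LinearMap.coe_comp] at hS_bij
    exact .of_comp hS_bij.1
  · rw [← h_col, LinearMap.coe_comp] at hS_bij
    exact .of_comp hS_bij.2

theorem involutionMap_bijective [IsLocalRing R] {β : I → I} (hβ : Function.Involutive β)
    {p : I → Prop} (hp : ∀ i, p (β i) ↔ p i) {f g : I → R} (hf : ∀ i, IsUnit (f i) ↔ p i)
    (hg : ∀ i, IsUnit (g i) ↔ ¬p i) : Function.Bijective (involutionMap β f g) := by
  classical
  -- Swapping the coordinates `i` and `β i` wherever `p` fails moves all units to the diagonal.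
  let ρ (i : I) : I := if p i then i else β i
  have hρ : Function.Involutive ρ := fun i => by by_cases hi : p i <;> simp [ρ, hi, hp, hβ i]
  let F (i : I) : R := if p i then f i else g i
  let G (i : I) : R := if p i then g i else f i
  have hFG : Function.Bijective (involutionMap β F G) :=
    involutionMap_bijective_of_isUnit hβ (fun i => by by_cases hi : p i <;> simp [F, hi, hf, hg])
      fun i => by by_cases hi : p i <;> simp [G, hi, hf, hg]
  have hρ_comp : Function.Bijective fun x : I → R => x ∘ ρ :=
    Function.Involutive.bijective fun x => by simp only [Function.comp_assoc, hρ.comp_self]; rfl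
  have h_factor : involutionMap β f g = involutionMap β F G ∘ fun x => x ∘ ρ := by
    ext x i
    by_cases hi : p i <;>
      simp [involutionMap_apply, F, G, ρ, hi, hp, hβ i, add_comm]
  rw [h_factor]
  exact hFG.comp hρ_comp

end Involution

namespace CyclicallyPresented

variable {I : Type*}

/-- The projection of `I → R` onto the product of the modules `R/(a i)R`. -/
def piMkQ (a : I → R) : (I → R) →ₗ[Rᵐᵒᵖ] ((i : I) → CyclicallyPresented R (a i)) :=
  LinearMap.pi fun i => Submodule.mkQ _ ∘ₗ LinearMap.proj i

theorem piMkQ_surjective (a : I → R) : Function.Surjective (piMkQ a) :=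
  Function.Surjective.piMap fun _ => Submodule.mkQ_surjective _

theorem mem_ker_piMkQ {a x : I → R} : x ∈ (piMkQ a).ker ↔ ∃ t, a * t = x := by
  have h_coord (i : I) : piMkQ a x i = 0 ↔ ∃ t, a i * t = x i := by
    simp only [piMkQ, LinearMap.pi_apply, LinearMap.comp_apply, LinearMap.proj_apply,
      Submodule.mkQ_apply, Submodule.Quotient.mk_eq_zero, mem_span_mulOpposite_singleton]
  simp only [LinearMap.mem_ker, funext_iff, Pi.zero_apply, h_coord, Classical.skolem, Pi.mul_apply]

theorem nonempty_pi_equiv_of_lift {J : Type*} {a : I → R} {b : J → R}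
    {T : (I → R) →ₗ[Rᵐᵒᵖ] (J → R)} {T' : (I → R) → (J → R)} (hT : Function.Bijective T)
    (hT' : Function.Surjective T') (h_comm : ∀ t, T (a * t) = b * T' t) :
    Nonempty (((i : I) → CyclicallyPresented R (a i)) ≃ₗ[Rᵐᵒᵖ]
      ((j : J) → CyclicallyPresented R (b j))) := by
  have h_ker : (piMkQ a).ker = (piMkQ b ∘ₗ T).ker := by
    ext x
    rw [LinearMap.ker_comp, Submodule.mem_comap, mem_ker_piMkQ, mem_ker_piMkQ, hT'.exists]
    simp only [← h_comm, hT.1.eq_iff]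
  exact ⟨((piMkQ a).quotKerEquivOfSurjective (piMkQ_surjective a)).symm ≪≫ₗ
    Submodule.quotEquivOfEq _ _ h_ker ≪≫ₗ
    (piMkQ b ∘ₗ T).quotKerEquivOfSurjective ((piMkQ_surjective b).comp hT.2)⟩

theorem nonempty_pi_equiv_of_involutive [IsLocalRing R] {a b : I → R} {β : I → I}
    (hβ : Function.Involutive β) (hl : ∀ i, SameLowerPart R (a i) (b i))
    (hu : ∀ i, SameUpperPart R (a (β i)) (b i)) :
    Nonempty (((i : I) → CyclicallyPresented R (a i)) ≃ₗ[Rᵐᵒᵖ]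
      ((i : I) → CyclicallyPresented R (b i))) := by
  have hU (i : I) : SameUpperPart R (a (β i)) (a (β (β i))) ↔ SameUpperPart R (a i) (a (β i)) := by
    rw [hβ i]
    exact ⟨.symm, .symm⟩
  have hL (i : I) : SameLowerPart R (a (β i)) (a (β (β i))) ↔ SameLowerPart R (a i) (a (β i)) := by
    rw [hβ i]
    exact ⟨.symm, .symm⟩
  choose f f' g g' hf hg hf_unit hg_unit hf'_unit hg'_unit using
    fun i => exists_intertwiners (hl i) (hu i)
  refine nonempty_pi_equiv_of_lift (involutionMap_bijective hβ hU hf_unit hg_unit)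
    (involutionMap_bijective hβ (fun i => imp_congr (hL i) (hU i)) hf'_unit hg'_unit).2
    fun t => funext fun i => ?_
  simp only [involutionMap_apply, Pi.add_apply, Pi.mul_apply, Function.comp_apply, mul_add,
    ← mul_assoc, hf, hg]

end CyclicallyPresented

end

section Permutation

variable {I : Type*} {π : Equiv.Perm I}

theorem zpow_neg_apply_congr {m n : ℤ} {i : I} (h : (π ^ m) i = (π ^ n) i) :
    (π ^ (-m)) i = (π ^ (-n)) i :=
  calc (π ^ (-m)) i = (π ^ (-m - n)) ((π ^ n) i) := by
        rw [← Equiv.Perm.mul_apply, ← zpow_add, sub_add_cancel]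
    _ = (π ^ (-n - m)) ((π ^ m) i) := by rw [h, neg_sub_left, neg_sub_left, add_comm]
    _ = (π ^ (-n)) i := by rw [← Equiv.Perm.mul_apply, ← zpow_add, sub_add_cancel]

theorem exists_involutive_involutive_comp_perm (π : Equiv.Perm I) :
    ∃ α : I → I, Function.Involutive α ∧ Function.Involutive (α ∘ π) ∧
      ∀ i, π.SameCycle i (α i) := by
  obtain ⟨c, hc, hc_congr⟩ : ∃ c : I → I, (∀ i, π.SameCycle (c i) i) ∧
      ∀ {i j}, π.SameCycle i j → c i = c j :=
    let cycles := Equiv.Perm.SameCycle.setoid π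
    ⟨fun i => (Quotient.mk cycles i).out, fun i => Quotient.mk_out (s := cycles) i,
      fun h => congrArg Quotient.out (Quotient.sound (s := cycles) h)⟩
  choose n hn using hc
  -- Reflect each cycle about its base point `c i`.
  let α (i : I) : I := (π ^ (-n i)) (c i)
  have hα (i : I) (m : ℤ) : α ((π ^ m) (c i)) = (π ^ (-m)) (c i) := by
    have hc_eq : c ((π ^ m) (c i)) = c i := hc_congr (by simpa using ⟨n i, hn i⟩)
    have hn' := hn ((π ^ m) (c i))
    simp only [α]
    rw [hc_eq] at hn' ⊢
    exact zpow_neg_apply_congr hn'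
  have hπα (m : ℤ) (i : I) : π ((π ^ m) i) = (π ^ (1 + m)) i := by
    rw [zpow_one_add, Equiv.Perm.mul_apply]
  refine ⟨α, fun i => ?_, fun i => ?_, fun i => ?_⟩
  · calc α (α i) = (π ^ (- -n i)) (c i) := hα i _
      _ = i := by rw [neg_neg, hn]
  · calc α (π (α (π i))) = α (π (α ((π ^ (1 + n i)) (c i)))) := by rw [← hπα, hn]
      _ = (π ^ (-(1 + -(1 + n i)))) (c i) := by rw [hα, hπα, hα]
      _ = i := by rw [neg_add, neg_neg, neg_add_cancel_left, hn]
  · rw [Equiv.Perm.sameCycle_zpow_right]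
    exact Equiv.Perm.SameCycle.symm ⟨n i, hn i⟩

theorem rel_of_sameCycle {r : I → I → Prop} (hr : Equivalence r) (hπ : ∀ i, r i (π i)) {i j : I}
    (hij : π.SameCycle i j) : r i j := by
  obtain ⟨n, rfl⟩ := hij
  induction n generalizing i with
  | zero => exact hr.refl i
  | succ n ih =>
    rw [zpow_add_one, Equiv.Perm.mul_apply]
    exact hr.trans (hπ i) ih
  | pred n ih =>
    have h_inv : r i (π⁻¹ i) := by simpa using hr.symm (hπ (π⁻¹ i))
    rw [zpow_sub_one, Equiv.Perm.mul_apply]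
    exact hr.trans h_inv ih

end Permutation

/-- Direct products of cyclically presented modules over a local ring whose lower parts and
epigeny classes are matched by bijections are isomorphic (as right `R`-modules). -/
theorem direct_products_of_cyclically_presented_isomorphic
    {R : Type*} [Ring R] [IsLocalRing R] {I J : Type*}
    (r : I → R) (s : J → R)
    (hr0 : ∀ i, r i ≠ 0) (hrJ : ∀ i, ¬IsUnit (r i))
    (hs0 : ∀ j, s j ≠ 0) (hsJ : ∀ j, ¬IsUnit (s j))
    (σ τ : I ≃ J)
    (hl : ∀ i, SameLowerPart R (r i) (s (σ i)))
    (he : ∀ i, SameEpigenyClass Rᵐᵒᵖ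
      (CyclicallyPresented R (r i)) (CyclicallyPresented R (s (τ i)))) :
    Nonempty (((i : I) → CyclicallyPresented R (r i)) ≃ₗ[Rᵐᵒᵖ]
      ((j : J) → CyclicallyPresented R (s j))) := by
  let π : Equiv.Perm I := σ.trans τ.symm
  have hu (i : I) : SameUpperPart R (r (π i)) (s (σ i)) := by
    simpa [π] using (he (π i)).sameUpperPart
  obtain ⟨α, hα, hαπ, h_cycle⟩ := exists_involutive_involutive_comp_perm π
  have h_linked (i : I) : Linked (r i) (r (α i)) :=
    rel_of_sameCycle ((Linked.equivalence R).comap r)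
      (fun i => ⟨s (σ i), (hl i).symm, (hu i).symm⟩) (h_cycle i)
  choose d hdl hdu using h_linked
  have hdu_s (i : I) : SameUpperPart R (d (α (π i))) (s (σ i)) := by
    have hd := hdu (α (π i))
    rw [hα (π i)] at hd
    exact hd.trans (hu i)
  obtain ⟨e_d⟩ := CyclicallyPresented.nonempty_pi_equiv_of_involutive hα
    (fun i => (hdl i).symm) fun i => (hdu i).symm
  obtain ⟨e_s⟩ := CyclicallyPresented.nonempty_pi_equiv_of_involutive (b := s ∘ σ) hαπ
    (fun i => (hdl i).trans (hl i)) hdu_s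
  exact ⟨e_d ≪≫ₗ e_s ≪≫ₗ
    LinearEquiv.piCongrLeft Rᵐᵒᵖ (fun j => CyclicallyPresented R (s j)) σ⟩
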